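/- arXiv:2202.05614 — 7 statements merged into one kernel-verified Lean document; each statement's English description precedes it below -/
import Mathlib

section
/- Let H and K be real Hilbert spaces, let F, G : H → K be bounded linear operators and let λ > 0. Then sup over h ∈ H with ‖h‖ ≤ 1 of inf over q ∈ H of ( ‖F h − G q‖² + λ‖q‖² ) equals λ · ‖(G G* + λ I)^{-1/2} ∘ F‖²_op. (This is the closed-form expression for the dissimilarity D_λ at the operator level.) -/
open ContinuousLinearMap

/-!
For fixed `k`, put `z = (G G* + λ I)⁻¹ k`. Completing the square around `q = G* z` shows that
`‖k - G q‖² + λ ‖q‖²` has minimum `λ ⟪k, z⟫`, and `⟪k, z⟫ = ‖T k‖²` whenever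
`T* T = (G G* + λ I)⁻¹`. The supremum over `k = F h` with `‖h‖ ≤ 1` is then the squared operator
norm of `T ∘ F`, up to the factor `λ`.
-/

open RCLike

open scoped InnerProductSpace

section Tikhonov

variable {𝕜 H K : Type*} [RCLike 𝕜]
  [NormedAddCommGroup H] [InnerProductSpace 𝕜 H] [CompleteSpace H]
  [NormedAddCommGroup K] [InnerProductSpace 𝕜 K] [CompleteSpace K]

theorem re_inner_comp_adjoint_add_smul_self (G : H →L[𝕜] K) (l : ℝ) (z : K) :
    re ⟪G (adjoint G z) + (l : 𝕜) • z, z⟫_𝕜 = ‖adjoint G z‖ ^ 2 + l * ‖z‖ ^ 2 := by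
  rw [inner_add_left, map_add, ← adjoint_inner_right, inner_self_eq_norm_sq, inner_smul_left,
    conj_ofReal, re_ofReal_mul, inner_self_eq_norm_sq]

theorem norm_sub_apply_sq_add_mul_norm_sq (G : H →L[𝕜] K) (l : ℝ) (z : K) (q : H) :
    ‖G (adjoint G z) + (l : 𝕜) • z - G q‖ ^ 2 + l * ‖q‖ ^ 2 =
      l * re ⟪G (adjoint G z) + (l : 𝕜) • z, z⟫_𝕜 +
        (‖G (q - adjoint G z)‖ ^ 2 + l * ‖q - adjoint G z‖ ^ 2) := by
  obtain ⟨p, rfl⟩ : ∃ p, q = adjoint G z + p := ⟨q - adjoint G z, (add_sub_cancel _ _).symm⟩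
  have residual : G (adjoint G z) + (l : 𝕜) • z - G (adjoint G z + p) = (l : 𝕜) • z - G p := by
    rw [map_add, add_sub_add_left_eq_sub]
  rw [residual, re_inner_comp_adjoint_add_smul_self, add_sub_cancel_left, norm_sub_sq (𝕜 := 𝕜),
    norm_add_sq (𝕜 := 𝕜), adjoint_inner_left, inner_smul_left, conj_ofReal, re_ofReal_mul,
    norm_smul, mul_pow, norm_ofReal, sq_abs]
  ring

theorem iInf_norm_sub_apply_sq_add_mul_norm_sq (G : H →L[𝕜] K) {l : ℝ} (hl : 0 ≤ l) (z : K) :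
    ⨅ q : H, (‖G (adjoint G z) + (l : 𝕜) • z - G q‖ ^ 2 + l * ‖q‖ ^ 2) =
      l * re ⟪G (adjoint G z) + (l : 𝕜) • z, z⟫_𝕜 := by
  simp_rw [norm_sub_apply_sq_add_mul_norm_sq]
  refine IsLeast.csInf_eq ⟨⟨adjoint G z, by simp⟩, ?_⟩
  rintro _ ⟨q, rfl⟩
  exact le_add_of_nonneg_right (by positivity)

theorem iInf_norm_sub_apply_sq_add_mul_norm_sq_eq_mul_norm_apply_sq {L : Type*}
    [NormedAddCommGroup L] [InnerProductSpace 𝕜 L] [CompleteSpace L]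
    (G : H →L[𝕜] K) {l : ℝ} (hl : 0 ≤ l) (T : K →L[𝕜] L)
    (hT : (G ∘L adjoint G + (l : 𝕜) • (1 : K →L[𝕜] K)) ∘L (adjoint T ∘L T) = 1) (k : K) :
    ⨅ q : H, (‖k - G q‖ ^ 2 + l * ‖q‖ ^ 2) = l * ‖T k‖ ^ 2 := by
  have hk : G (adjoint G ((adjoint T ∘L T) k)) + (l : 𝕜) • (adjoint T ∘L T) k = k :=
    DFunLike.congr_fun hT k
  have iInf_eq := iInf_norm_sub_apply_sq_add_mul_norm_sq G hl ((adjoint T ∘L T) k)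
  rwa [hk, ← apply_norm_sq_eq_inner_adjoint_right] at iInf_eq

end Tikhonov

theorem iSup_norm_apply_sq_eq_opNorm_sq {𝕜 E L : Type*} [DenselyNormedField 𝕜]
    [NormedAddCommGroup E] [NormedSpace 𝕜 E] [SeminormedAddCommGroup L] [NormedSpace 𝕜 L]
    (f : E →L[𝕜] L) : ⨆ h : {h : E // ‖h‖ ≤ 1}, ‖f h.1‖ ^ 2 = ‖f‖ ^ 2 := by
  rw [← f.sSup_unitClosedBall_eq_norm, sSup_image', Real.iSup_pow fun _ ↦ norm_nonneg _]
  exact (Equiv.subtypeEquivRight fun _ ↦ mem_closedBall_zero_iff.symm).iSup_congr fun _ ↦ rfl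

theorem stmt0_general {𝕜 E H K L : Type*} [RCLike 𝕜]
    [NormedAddCommGroup E] [NormedSpace 𝕜 E]
    [NormedAddCommGroup H] [InnerProductSpace 𝕜 H] [CompleteSpace H]
    [NormedAddCommGroup K] [InnerProductSpace 𝕜 K] [CompleteSpace K]
    [NormedAddCommGroup L] [InnerProductSpace 𝕜 L] [CompleteSpace L]
    (F : E →L[𝕜] K) (G : H →L[𝕜] K) {l : ℝ} (hl : 0 ≤ l) (T : K →L[𝕜] L)
    (hT : (G ∘L adjoint G + (l : 𝕜) • (1 : K →L[𝕜] K)) ∘L (adjoint T ∘L T) = 1) :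
    ⨆ h : {h : E // ‖h‖ ≤ 1}, ⨅ q : H, (‖F h.1 - G q‖ ^ 2 + l * ‖q‖ ^ 2) =
      l * ‖T ∘L F‖ ^ 2 := by
  simp_rw [iInf_norm_sub_apply_sq_add_mul_norm_sq_eq_mul_norm_apply_sq G hl T hT,
    ← Real.mul_iSup_of_nonneg hl, ← iSup_norm_apply_sq_eq_opNorm_sq (T ∘L F), comp_apply]

/-- Closed-form expression for the dissimilarity `D_λ` at the operator level:
`sup_{‖h‖ ≤ 1} inf_q (‖F h − G q‖² + λ‖q‖²) = λ ‖(G G* + λ I)^{-1/2} ∘ F‖²`.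
Here `J` is the inverse of `G G* + λ I` and `S` is its positive square root,
so that `S = (G G* + λ I)^{-1/2}`. -/
theorem stmt0
    {H K : Type*} [NormedAddCommGroup H] [InnerProductSpace ℝ H] [CompleteSpace H]
    [NormedAddCommGroup K] [InnerProductSpace ℝ K] [CompleteSpace K]
    (F G : H →L[ℝ] K) (l : ℝ) (hl : 0 < l)
    (J S : K →L[ℝ] K)
    (hJ : (G ∘L adjoint G + l • (1 : K →L[ℝ] K)) ∘L J = 1)
    (hJ' : J ∘L (G ∘L adjoint G + l • (1 : K →L[ℝ] K)) = 1)
    (hS : S.IsPositive) (hSsq : S ∘L S = J) :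
    (⨆ h : {h : H // ‖h‖ ≤ 1}, ⨅ q : H, (‖F h.1 - G q‖ ^ 2 + l * ‖q‖ ^ 2))
      = l * ‖S ∘L F‖ ^ 2 := by
  have hT : adjoint S ∘L S = J := by rw [hS.isSelfAdjoint.adjoint_eq, hSsq]
  exact stmt0_general F G hl.le S (hT ▸ hJ)
end

section
/- Let H and K be real Hilbert spaces, G : H → K a bounded linear operator, v ∈ K and λ > 0. Then the infimum over q ∈ H of ‖v − G q‖² + λ‖q‖² equals λ ⟨v, (G G* + λ I)^{-1} v⟩. -/
open ContinuousLinearMap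
open scoped RealInnerProductSpace

/-!
Put `w = (G G* + λ I)⁻¹ v` and `p = G* w`, so that `v = G p + λ w`. Completing the square at `p`,
the cross terms `-2 λ Re ⟪w, G (q - p)⟫` and `2 λ Re ⟪p, q - p⟫` cancel by adjointness, and
`‖v - G q‖² + λ ‖q‖² = λ Re ⟪v, w⟫ + ‖G (q - p)‖² + λ ‖q - p‖²`, which is smallest at `q = p`.
-/

section RegularizedLeastSquares

open scoped InnerProductSpace

variable {𝕜 E F : Type*} [RCLike 𝕜] [SeminormedAddCommGroup E] [InnerProductSpace 𝕜 E]
  [SeminormedAddCommGroup F] [InnerProductSpace 𝕜 F] {G : E →ₗ[𝕜] F} {p : E} {v w : F} {l : ℝ}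

theorem re_inner_eq_norm_sq_add_mul_norm_sq (hp : ∀ x, ⟪G x, w⟫_𝕜 = ⟪x, p⟫_𝕜)
    (hw : G p + (l : 𝕜) • w = v) :
    RCLike.re ⟪v, w⟫_𝕜 = ‖p‖ ^ 2 + l * ‖w‖ ^ 2 := by
  rw [← hw, inner_add_left, hp, inner_smul_left, RCLike.conj_ofReal, map_add,
    RCLike.re_ofReal_mul, inner_self_eq_norm_sq, inner_self_eq_norm_sq]

theorem norm_sub_sq_add_mul_norm_sq_eq (hp : ∀ x, ⟪G x, w⟫_𝕜 = ⟪x, p⟫_𝕜)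
    (hw : G p + (l : 𝕜) • w = v) (q : E) :
    ‖v - G q‖ ^ 2 + l * ‖q‖ ^ 2 =
      l * RCLike.re ⟪v, w⟫_𝕜 + (‖G (q - p)‖ ^ 2 + l * ‖q - p‖ ^ 2) := by
  have residual_sq : ‖v - G q‖ ^ 2 =
      ‖G (q - p)‖ ^ 2 - 2 * (l * RCLike.re ⟪q - p, p⟫_𝕜) + l ^ 2 * ‖w‖ ^ 2 := by
    have residual_eq : v - G q = (l : 𝕜) • w - G (q - p) := by
      rw [← hw, map_sub]
      abel
    rw [residual_eq, norm_sub_rev, norm_sub_sq (𝕜 := 𝕜), inner_smul_right, hp,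
      RCLike.re_ofReal_mul, norm_smul, RCLike.norm_ofReal, mul_pow, sq_abs]
  have norm_sq : ‖q‖ ^ 2 = ‖q - p‖ ^ 2 + 2 * RCLike.re ⟪q - p, p⟫_𝕜 + ‖p‖ ^ 2 := by
    rw [← norm_add_sq, sub_add_cancel]
  rw [residual_sq, norm_sq, re_inner_eq_norm_sq_add_mul_norm_sq hp hw]
  ring

theorem isLeast_range_norm_sub_sq_add_mul_norm_sq (hl : 0 ≤ l)
    (hp : ∀ x, ⟪G x, w⟫_𝕜 = ⟪x, p⟫_𝕜) (hw : G p + (l : 𝕜) • w = v) :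
    IsLeast (Set.range fun q => ‖v - G q‖ ^ 2 + l * ‖q‖ ^ 2) (l * RCLike.re ⟪v, w⟫_𝕜) := by
  simp only [norm_sub_sq_add_mul_norm_sq_eq hp hw]
  refine ⟨⟨p, by simp⟩, ?_⟩
  rintro _ ⟨q, rfl⟩
  exact le_add_of_nonneg_right (by positivity)

theorem stmt2_general (hl : 0 ≤ l) (hp : ∀ x, ⟪G x, w⟫_𝕜 = ⟪x, p⟫_𝕜)
    (hw : G p + (l : 𝕜) • w = v) :
    ⨅ q, (‖v - G q‖ ^ 2 + l * ‖q‖ ^ 2) = l * RCLike.re ⟪v, w⟫_𝕜 :=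
  (isLeast_range_norm_sub_sq_add_mul_norm_sq hl hp hw).csInf_eq

end RegularizedLeastSquares

/-- `inf_q ‖v − G q‖² + λ‖q‖² = λ ⟨v, (G G* + λ I)^{-1} v⟩`.
Here `J` is the inverse of `G G* + λ I`. -/
theorem stmt2
    {H K : Type*} [NormedAddCommGroup H] [InnerProductSpace ℝ H] [CompleteSpace H]
    [NormedAddCommGroup K] [InnerProductSpace ℝ K] [CompleteSpace K]
    (G : H →L[ℝ] K) (v : K) (l : ℝ) (hl : 0 < l)
    (J : K →L[ℝ] K)
    (hJ : (G ∘L adjoint G + l • (1 : K →L[ℝ] K)) ∘L J = 1)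
    (hJ' : J ∘L (G ∘L adjoint G + l • (1 : K →L[ℝ] K)) = 1) :
    (⨅ q : H, (‖v - G q‖ ^ 2 + l * ‖q‖ ^ 2)) = l * ⟪v, J v⟫ :=
  stmt2_general (G := G.toLinearMap) hl.le (fun x => (adjoint_inner_right G x (J v)).symm)
    (DFunLike.congr_fun hJ v)
end

section
/- Let H and K be real Hilbert spaces, F, G : H → K and R : H → H bounded linear operators such that F = G ∘ R, and let λ > 0. Then λ ‖(G G* + λ I)^{-1/2} ∘ F‖²_op ≤ λ ‖R‖²_op. (This is the operator-level mechanism behind the diffeomorphism-invariance bound D_λ(f, f∘Q) ≤ λ C_μ² C_Q².) -/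
open ContinuousLinearMap

/-!
Let `A = G G* + P` with `P` positive (`P = λ I` in `stmt8`) and `S = A^{-1/2}`. Conjugating
`G G* ≤ A` by the self-adjoint `S` gives `(S G) (S G)* = S G G* S ≤ S A S = I`, so `S G` is a
contraction.
-/

theorem mul_mul_eq_one_of_isSelfAdjoint {M : Type*} [Monoid M] [StarMul M] {a s : M}
    (ha : IsSelfAdjoint a) (hs : IsSelfAdjoint s) (h : a * (s * s) = 1) : s * a * s = 1 := by
  have h_star : s * s * a = 1 := by
    simpa only [star_mul, star_one, ha.star_eq, hs.star_eq] using congrArg star h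
  have h_comm : a * s = s * a :=
    left_inv_eq_right_inv ((mul_assoc a s s).trans h) ((mul_assoc s s a).symm.trans h_star)
  rw [← h_comm, mul_assoc, h]

section

variable {𝕜 E H K : Type*} [RCLike 𝕜] [SeminormedAddCommGroup E] [NormedSpace 𝕜 E]
  [NormedAddCommGroup H] [InnerProductSpace 𝕜 H] [CompleteSpace H]
  [NormedAddCommGroup K] [InnerProductSpace 𝕜 K] [CompleteSpace K]

theorem opNorm_le_one_of_comp_adjoint_le_one {T : H →L[𝕜] K} (hT : T ∘L adjoint T ≤ 1) :
    ‖T‖ ≤ 1 := by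
  rw [← (adjoint (𝕜 := 𝕜) (E := H) (F := K)).norm_map T]
  refine opNorm_le_bound _ zero_le_one fun y => ?_
  rw [one_mul, ← sq_le_sq₀ (norm_nonneg _) (norm_nonneg _)]
  calc ‖adjoint T y‖ ^ 2
      = RCLike.re (inner 𝕜 ((T ∘L adjoint T) y) y) := by
        simpa only [adjoint_adjoint] using apply_norm_sq_eq_inner_adjoint_left (adjoint T) y
    _ ≤ RCLike.re (inner 𝕜 y y) := by
        simpa [inner_sub_left] using hT.re_inner_nonneg_left y
    _ = ‖y‖ ^ 2 := inner_self_eq_norm_sq y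

theorem opNorm_comp_le_one_of_isSelfAdjoint {G : H →L[𝕜] K} {P S : K →L[𝕜] K}
    (hP : P.IsPositive) (hS : IsSelfAdjoint S)
    (h : (G ∘L adjoint G + P) ∘L (S ∘L S) = 1) : ‖S ∘L G‖ ≤ 1 := by
  have h_selfAdjoint : IsSelfAdjoint (G ∘L adjoint G + P) :=
    (isPositive_self_comp_adjoint G).isSelfAdjoint.add hP.isSelfAdjoint
  have h_conj : S ∘L (G ∘L adjoint G + P) ∘L S = 1 :=
    mul_mul_eq_one_of_isSelfAdjoint h_selfAdjoint hS h
  have h_sub : 1 - (S ∘L G) ∘L adjoint (S ∘L G) = S ∘L P ∘L adjoint S := by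
    rw [← h_conj, adjoint_comp, hS.adjoint_eq, add_comp, comp_add]
    exact add_sub_cancel_left _ _
  refine opNorm_le_one_of_comp_adjoint_le_one ?_
  rw [ContinuousLinearMap.le_def, h_sub]
  exact hP.conj_adjoint S

theorem stmt8_general {F : E →L[𝕜] K} {G : H →L[𝕜] K} {R : E →L[𝕜] H} (hFGR : F = G ∘L R)
    {P J S : K →L[𝕜] K} (hP : P.IsPositive) (hJ : (G ∘L adjoint G + P) ∘L J = 1)
    (hS : IsSelfAdjoint S) (hSsq : S ∘L S = J) : ‖S ∘L F‖ ≤ ‖R‖ := by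
  subst hFGR hSsq
  calc ‖(S ∘L G) ∘L R‖ ≤ ‖S ∘L G‖ * ‖R‖ := opNorm_comp_le _ _
    _ ≤ ‖R‖ := mul_le_of_le_one_left (norm_nonneg R) (opNorm_comp_le_one_of_isSelfAdjoint hP hS hJ)

end

/-- If `F = G ∘ R` then `λ ‖(G G* + λ I)^{-1/2} ∘ F‖² ≤ λ ‖R‖²`.
Here `J` is the inverse of `G G* + λ I` and `S` its positive square root,
so that `S = (G G* + λ I)^{-1/2}`. -/
theorem stmt8
    {H K : Type*} [NormedAddCommGroup H] [InnerProductSpace ℝ H] [CompleteSpace H]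
    [NormedAddCommGroup K] [InnerProductSpace ℝ K] [CompleteSpace K]
    (F G : H →L[ℝ] K) (R : H →L[ℝ] H) (hFGR : F = G ∘L R) (l : ℝ) (hl : 0 < l)
    (J S : K →L[ℝ] K)
    (hJ : (G ∘L adjoint G + l • (1 : K →L[ℝ] K)) ∘L J = 1)
    (hJ' : J ∘L (G ∘L adjoint G + l • (1 : K →L[ℝ] K)) = 1)
    (hS : S.IsPositive) (hSsq : S ∘L S = J) :
    l * ‖S ∘L F‖ ^ 2 ≤ l * ‖R‖ ^ 2 := by
  gcongr
  exact stmt8_general hFGR (isPositive_one.smul_of_nonneg hl.le) hJ hS.isSelfAdjoint hSsq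
end

section
/- Let K and E be real Hilbert spaces, U : K → E a bounded linear operator with U U* = I_E (a co-isometry), B : E → E a positive bounded operator and λ > 0. Then U* B U + λ I_K is invertible and U (U* B U + λ I_K)^{-1} U* = (B + λ I_E)^{-1}. -/
open ContinuousLinearMap

/-! Write `A = V B U + l` and `C = B + l`, where `U V = 1`. Then `A V = V C` and `U A = C U`, so `A`
acts as `C` on the range of `V` and as the scalar `l` on the complementary kernel of `U`. Hence `A`
is invertible as soon as `C` and `l` are, and `A⁻¹ V = V C⁻¹` gives `U A⁻¹ V = C⁻¹`. The operator
`C` is invertible because it is coercive. -/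

section Intertwining

variable {R M N : Type*} [Semiring R]
  [TopologicalSpace M] [AddCommMonoid M] [Module R M]
  [TopologicalSpace N] [AddCommMonoid N] [Module R N]

theorem inverse_comp_eq_comp_inverse {A : M →L[R] M} {C : N →L[R] N} {V : N →L[R] M}
    (hA : IsUnit A) (hC : IsUnit C) (hAC : A ∘L V = V ∘L C) :
    Ring.inverse A ∘L V = V ∘L Ring.inverse C :=
  calc Ring.inverse A ∘L V
      = Ring.inverse A ∘L (V ∘L C) ∘L Ring.inverse C := by
        rw [comp_assoc, ← mul_def C, Ring.mul_inverse_cancel C hC, one_def, comp_id]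
    _ = (Ring.inverse A ∘L A) ∘L V ∘L Ring.inverse C := by
        rw [← hAC, comp_assoc, comp_assoc]
    _ = V ∘L Ring.inverse C := by
        rw [← mul_def, Ring.inverse_mul_cancel A hA, one_def, id_comp]

end Intertwining

section ScalarPerturbation

variable {R M N : Type*} [CommSemiring R]
  [TopologicalSpace M] [AddCommMonoid M] [ContinuousAdd M] [Module R M] [ContinuousConstSMul R M]
  [TopologicalSpace N] [AddCommMonoid N] [ContinuousAdd N] [Module R N] [ContinuousConstSMul R N]
  {U : M →L[R] N} {V : N →L[R] M}

theorem conj_add_smul_one_comp (hUV : U ∘L V = 1) (B : N →L[R] N) (l : R) :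
    (V ∘L B ∘L U + l • (1 : M →L[R] M)) ∘L V = V ∘L (B + l • (1 : N →L[R] N)) := by
  have hUV_apply (y : N) : U (V y) = y := DFunLike.congr_fun hUV y
  ext y
  simp [hUV_apply]

theorem comp_conj_add_smul_one (hUV : U ∘L V = 1) (B : N →L[R] N) (l : R) :
    U ∘L (V ∘L B ∘L U + l • (1 : M →L[R] M)) = (B + l • (1 : N →L[R] N)) ∘L U := by
  have hUV_apply (y : N) : U (V y) = y := DFunLike.congr_fun hUV y
  ext x
  simp [hUV_apply]

end ScalarPerturbation

section Invertibility

variable {R M N : Type*} [CommRing R]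
  [TopologicalSpace M] [AddCommGroup M] [IsTopologicalAddGroup M] [Module R M]
  [ContinuousConstSMul R M]
  [TopologicalSpace N] [AddCommGroup N] [ContinuousAdd N] [Module R N] [ContinuousConstSMul R N]
  {U : M →L[R] N} {V : N →L[R] M}

theorem isUnit_conj_add_smul_one (hUV : U ∘L V = 1) {B : N →L[R] N} {l : R}
    (hl : IsUnit l) (hC : IsUnit (B + l • (1 : N →L[R] N))) :
    IsUnit (V ∘L B ∘L U + l • (1 : M →L[R] M)) := by
  obtain ⟨linv, hlinv_l⟩ := hl.exists_left_inv
  obtain ⟨Cinv, hC_Cinv, hCinv_C⟩ := isUnit_iff_exists.mp hC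
  have hAV := conj_add_smul_one_comp hUV B l
  have hUA := comp_conj_add_smul_one hUV B l
  set C := B + l • (1 : N →L[R] N)
  set A := V ∘L B ∘L U + l • (1 : M →L[R] M) with hA
  have hC_Cinv_apply (y : N) : C (Cinv y) = y := DFunLike.congr_fun hC_Cinv y
  have hCinv_C_apply (y : N) : Cinv (C y) = y := DFunLike.congr_fun hCinv_C y
  have hAV_apply (y : N) : A (V y) = V (C y) := DFunLike.congr_fun hAV y
  have hUA_apply (x : M) : U (A x) = C (U x) := DFunLike.congr_fun hUA x
  have hA_sub (x : M) : A x - V (C (U x)) = l • (x - V (U x)) := by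
    simp [hA, C, smul_sub]
  refine isUnit_iff_exists.mpr ⟨V ∘L Cinv ∘L U + linv • (1 - V ∘L U), ?_, ?_⟩
  · ext x
    calc A (V (Cinv (U x)) + linv • (x - V (U x)))
        = V (U x) + linv • (A x - V (C (U x))) := by
          simp only [map_add, map_smul, map_sub, hAV_apply, hC_Cinv_apply]
      _ = x := by rw [hA_sub, smul_smul, hlinv_l, one_smul, add_sub_cancel]
  · ext x
    calc V (Cinv (U (A x))) + linv • (A x - V (U (A x)))
        = V (U x) + linv • (A x - V (C (U x))) := by rw [hUA_apply, hCinv_C_apply]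
      _ = x := by rw [hA_sub, smul_smul, hlinv_l, one_smul, add_sub_cancel]

theorem comp_inverse_conj_add_smul_one_comp (hUV : U ∘L V = 1) {B : N →L[R] N} {l : R}
    (hl : IsUnit l) (hC : IsUnit (B + l • (1 : N →L[R] N))) :
    U ∘L Ring.inverse (V ∘L B ∘L U + l • (1 : M →L[R] M)) ∘L V
      = Ring.inverse (B + l • (1 : N →L[R] N)) := by
  rw [inverse_comp_eq_comp_inverse (isUnit_conj_add_smul_one hUV hl hC) hC
    (conj_add_smul_one_comp hUV B l), ← comp_assoc, hUV, one_def, id_comp]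

end Invertibility

section Accretive

variable {𝕜 E : Type*} [RCLike 𝕜] [NormedAddCommGroup E] [InnerProductSpace 𝕜 E] [CompleteSpace E]

theorem isUnit_add_smul_one_of_re_inner_nonneg {B : E →L[𝕜] E}
    (hB : ∀ x, 0 ≤ RCLike.re (inner 𝕜 (B x) x)) {l : 𝕜} (hl : 0 < RCLike.re l) :
    IsUnit (B + l • (1 : E →L[𝕜] E)) := by
  refine isUnit_of_forall_le_norm_inner_map _ (c := ⟨RCLike.re l, hl.le⟩) hl fun x ↦ ?_
  calc ‖x‖ ^ 2 * RCLike.re l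
      ≤ RCLike.re (inner 𝕜 (B x) x) + ‖x‖ ^ 2 * RCLike.re l := le_add_of_nonneg_left (hB x)
    _ = RCLike.re (inner 𝕜 ((B + l • (1 : E →L[𝕜] E)) x) x) := by
        rw [add_apply, smul_apply, one_apply_eq_self, inner_add_left, inner_smul_left,
          inner_self_eq_norm_sq_to_K, ← RCLike.ofReal_pow, map_add, RCLike.re_mul_ofReal,
          RCLike.conj_re, mul_comm]
    _ ≤ ‖inner 𝕜 ((B + l • (1 : E →L[𝕜] E)) x) x‖ := RCLike.re_le_norm _

theorem stmt10_general {K : Type*} [TopologicalSpace K] [AddCommGroup K]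
    [IsTopologicalAddGroup K] [Module 𝕜 K] [ContinuousConstSMul 𝕜 K]
    {U : K →L[𝕜] E} {V : E →L[𝕜] K} (hUV : U ∘L V = 1) {B : E →L[𝕜] E}
    (hB : ∀ x, 0 ≤ RCLike.re (inner 𝕜 (B x) x)) {l : 𝕜} (hl : 0 < RCLike.re l) :
    IsUnit (V ∘L B ∘L U + l • (1 : K →L[𝕜] K)) ∧
      U ∘L Ring.inverse (V ∘L B ∘L U + l • (1 : K →L[𝕜] K)) ∘L V
        = Ring.inverse (B + l • (1 : E →L[𝕜] E)) := by
  have hl_unit : IsUnit l := isUnit_iff_ne_zero.mpr fun h ↦ by simp [h] at hl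
  have hC := isUnit_add_smul_one_of_re_inner_nonneg hB hl
  exact ⟨isUnit_conj_add_smul_one hUV hl_unit hC,
    comp_inverse_conj_add_smul_one_comp hUV hl_unit hC⟩

end Accretive

/-- For a co-isometry `U : K → E` (i.e. `U U* = I`), a positive operator `B` on `E`
and `λ > 0`, the operator `U* B U + λ I` is invertible and
`U (U* B U + λ I)^{-1} U* = (B + λ I)^{-1}`. -/
theorem stmt10
    {K E : Type*} [NormedAddCommGroup K] [InnerProductSpace ℝ K] [CompleteSpace K]
    [NormedAddCommGroup E] [InnerProductSpace ℝ E] [CompleteSpace E]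
    (U : K →L[ℝ] E) (hU : U ∘L adjoint U = 1)
    (B : E →L[ℝ] E) (hB : B.IsPositive) (l : ℝ) (hl : 0 < l) :
    IsUnit (adjoint U ∘L B ∘L U + l • (1 : K →L[ℝ] K)) ∧
      U ∘L Ring.inverse (adjoint U ∘L B ∘L U + l • (1 : K →L[ℝ] K)) ∘L adjoint U
        = Ring.inverse (B + l • (1 : E →L[ℝ] E)) := by
  exact stmt10_general hU hB.re_inner_nonneg_left hl
end

section
/- Let H and K be real Hilbert spaces, B, B̂ : H → K bounded linear operators, and Q, Q̂ : K → K invertible positive bounded operators. Then | ‖Q^{-1/2} B‖²_op − ‖Q̂^{-1/2} B̂‖²_op | ≤ ‖B‖²_op ‖Q̂^{-1}‖_op ‖Q^{-1}‖_op ‖Q − Q̂‖_op + ‖Q̂^{-1}‖_op ‖B B* − B̂ B̂*‖_op. -/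
open ContinuousLinearMap

/-!
By the C⋆-identity `‖S B‖² = ‖B* (S* S) B‖`, so at fixed `B` this quantity depends on `S` only
through `S* S`, and is Lipschitz in it with constant `‖B‖²`. Taking adjoints, at fixed `S` it is
Lipschitz in `B B*` with constant `‖S‖² = ‖S* S‖`. Passing from `(S, B)` to `(Ŝ, B̂)` through
`(Ŝ, B)` leaves `‖Q⁻¹ - Q̂⁻¹‖` to be bounded, for which `Q⁻¹ - Q̂⁻¹ = Q⁻¹ (Q̂ - Q) Q̂⁻¹`.
-/

theorem norm_sub_le_of_mul_eq_one {R : Type*} [SeminormedRing R] {a a' b b' : R}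
    (ha : a' * a = 1) (hb : b * b' = 1) : ‖a' - b'‖ ≤ ‖a'‖ * ‖a - b‖ * ‖b'‖ := by
  have sub_eq : a' - b' = a' * (b - a) * b' := by
    rw [mul_sub, sub_mul, mul_assoc, hb, ha, mul_one, one_mul]
  rw [sub_eq, norm_sub_rev a b]
  exact norm_mul₃_le

section AdjointComp

variable {𝕜 E F G G' : Type*} [RCLike 𝕜]
  [NormedAddCommGroup E] [InnerProductSpace 𝕜 E] [CompleteSpace E]
  [NormedAddCommGroup F] [InnerProductSpace 𝕜 F] [CompleteSpace F]
  [NormedAddCommGroup G] [InnerProductSpace 𝕜 G] [CompleteSpace G]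
  [NormedAddCommGroup G'] [InnerProductSpace 𝕜 G'] [CompleteSpace G']

theorem norm_adjoint_comp_comp_le (A : F →L[𝕜] F) (B : E →L[𝕜] F) :
    ‖adjoint B ∘L A ∘L B‖ ≤ ‖B‖ ^ 2 * ‖A‖ :=
  calc ‖adjoint B ∘L A ∘L B‖
    _ ≤ ‖adjoint B‖ * (‖A‖ * ‖B‖) :=
        (opNorm_comp_le _ _).trans (by gcongr; exact opNorm_comp_le _ _)
    _ = ‖B‖ ^ 2 * ‖A‖ := by rw [LinearIsometryEquiv.norm_map]; ring

theorem norm_comp_sq_eq_norm_adjoint_comp (S : F →L[𝕜] G) (B : E →L[𝕜] F) :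
    ‖S ∘L B‖ ^ 2 = ‖adjoint B ∘L (adjoint S ∘L S) ∘L B‖ := by
  rw [sq, ← norm_adjoint_comp_self, adjoint_comp, comp_assoc, comp_assoc]

theorem norm_comp_eq_norm_adjoint_comp_adjoint (S : F →L[𝕜] G) (B : E →L[𝕜] F) :
    ‖S ∘L B‖ = ‖adjoint B ∘L adjoint S‖ := by
  rw [← adjoint_comp, LinearIsometryEquiv.norm_map]

theorem abs_norm_comp_sq_sub_norm_comp_sq_le_left
    (S : F →L[𝕜] G) (T : F →L[𝕜] G') (B : E →L[𝕜] F) :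
    |‖S ∘L B‖ ^ 2 - ‖T ∘L B‖ ^ 2| ≤ ‖B‖ ^ 2 * ‖adjoint S ∘L S - adjoint T ∘L T‖ := by
  rw [norm_comp_sq_eq_norm_adjoint_comp, norm_comp_sq_eq_norm_adjoint_comp]
  refine (abs_norm_sub_norm_le _ _).trans ?_
  rw [← comp_sub, ← sub_comp]
  exact norm_adjoint_comp_comp_le _ B

theorem abs_norm_comp_sq_sub_norm_comp_sq_le_right
    (S : F →L[𝕜] E) (B : G →L[𝕜] F) (C : G' →L[𝕜] F) :
    |‖S ∘L B‖ ^ 2 - ‖S ∘L C‖ ^ 2| ≤ ‖S‖ ^ 2 * ‖B ∘L adjoint B - C ∘L adjoint C‖ := by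
  simpa only [← norm_comp_eq_norm_adjoint_comp_adjoint, adjoint_adjoint,
    LinearIsometryEquiv.norm_map] using
    abs_norm_comp_sq_sub_norm_comp_sq_le_left (adjoint B) (adjoint C) (adjoint S)

end AdjointComp

theorem stmt13_general
    {𝕜 H H' K L L' : Type*} [RCLike 𝕜]
    [NormedAddCommGroup H] [InnerProductSpace 𝕜 H] [CompleteSpace H]
    [NormedAddCommGroup H'] [InnerProductSpace 𝕜 H'] [CompleteSpace H']
    [NormedAddCommGroup K] [InnerProductSpace 𝕜 K] [CompleteSpace K]
    [NormedAddCommGroup L] [InnerProductSpace 𝕜 L] [CompleteSpace L]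
    [NormedAddCommGroup L'] [InnerProductSpace 𝕜 L'] [CompleteSpace L']
    (B : H →L[𝕜] K) (Bhat : H' →L[𝕜] K) (Q Qhat JQ JQhat : K →L[𝕜] K)
    (S : K →L[𝕜] L) (Shat : K →L[𝕜] L')
    (hJQ : JQ ∘L Q = 1) (hJQhat : Qhat ∘L JQhat = 1)
    (hS : adjoint S ∘L S = JQ) (hShat : adjoint Shat ∘L Shat = JQhat) :
    |‖S ∘L B‖ ^ 2 - ‖Shat ∘L Bhat‖ ^ 2|
      ≤ ‖B‖ ^ 2 * ‖JQhat‖ * ‖JQ‖ * ‖Q - Qhat‖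
        + ‖JQhat‖ * ‖B ∘L adjoint B - Bhat ∘L adjoint Bhat‖ := by
  have norm_Shat_sq : ‖Shat‖ ^ 2 = ‖JQhat‖ := by rw [sq, ← norm_adjoint_comp_self, hShat]
  calc |‖S ∘L B‖ ^ 2 - ‖Shat ∘L Bhat‖ ^ 2|
    _ ≤ |‖S ∘L B‖ ^ 2 - ‖Shat ∘L B‖ ^ 2| + |‖Shat ∘L B‖ ^ 2 - ‖Shat ∘L Bhat‖ ^ 2| :=
        abs_sub_le _ _ _
    _ ≤ ‖B‖ ^ 2 * ‖JQ - JQhat‖ + ‖JQhat‖ * ‖B ∘L adjoint B - Bhat ∘L adjoint Bhat‖ := by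
        rw [← norm_Shat_sq, ← hS, ← hShat]
        gcongr
        · exact abs_norm_comp_sq_sub_norm_comp_sq_le_left S Shat B
        · exact abs_norm_comp_sq_sub_norm_comp_sq_le_right Shat B Bhat
    _ ≤ ‖B‖ ^ 2 * (‖JQ‖ * ‖Q - Qhat‖ * ‖JQhat‖)
          + ‖JQhat‖ * ‖B ∘L adjoint B - Bhat ∘L adjoint Bhat‖ := by
        gcongr
        exact norm_sub_le_of_mul_eq_one hJQ hJQhat
    _ = ‖B‖ ^ 2 * ‖JQhat‖ * ‖JQ‖ * ‖Q - Qhat‖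
          + ‖JQhat‖ * ‖B ∘L adjoint B - Bhat ∘L adjoint Bhat‖ := by ring

/-- Perturbation bound:
`| ‖Q^{-1/2} B‖² − ‖Q̂^{-1/2} B̂‖² | ≤ ‖B‖² ‖Q̂^{-1}‖ ‖Q^{-1}‖ ‖Q − Q̂‖ + ‖Q̂^{-1}‖ ‖B B* − B̂ B̂*‖`.
Here `JQ`, `JQhat` are the inverses of the invertible positive operators `Q`, `Qhat`,
and `S`, `Shat` the positive square roots of these inverses. -/
theorem stmt13
    {H K : Type*} [NormedAddCommGroup H] [InnerProductSpace ℝ H] [CompleteSpace H]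
    [NormedAddCommGroup K] [InnerProductSpace ℝ K] [CompleteSpace K]
    (B Bhat : H →L[ℝ] K) (Q Qhat : K →L[ℝ] K)
    (hQ : Q.IsPositive) (hQhat : Qhat.IsPositive)
    (JQ JQhat S Shat : K →L[ℝ] K)
    (hJQ : Q ∘L JQ = 1) (hJQ' : JQ ∘L Q = 1)
    (hJQhat : Qhat ∘L JQhat = 1) (hJQhat' : JQhat ∘L Qhat = 1)
    (hS : S.IsPositive) (hSsq : S ∘L S = JQ)
    (hShat : Shat.IsPositive) (hShatsq : Shat ∘L Shat = JQhat) :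
    |‖S ∘L B‖ ^ 2 - ‖Shat ∘L Bhat‖ ^ 2|
      ≤ ‖B‖ ^ 2 * ‖JQhat‖ * ‖JQ‖ * ‖Q - Qhat‖
        + ‖JQhat‖ * ‖B ∘L adjoint B - Bhat ∘L adjoint Bhat‖ := by
  exact stmt13_general B Bhat Q Qhat JQ JQhat S Shat hJQ' hJQhat
    (by rw [hS.isSelfAdjoint.adjoint_eq, hSsq]) (by rw [hShat.isSelfAdjoint.adjoint_eq, hShatsq])
end

section
/- Let H and K be real Hilbert spaces, B : H → K a bounded linear operator, and Q, Q̂ : K → K invertible positive bounded operators. Then | ‖Q^{-1/2} B‖²_op − ‖Q̂^{-1/2} B‖²_op | ≤ ‖B‖²_op ‖Q̂^{-1}‖_op ‖Q − Q̂‖_op ‖Q^{-1}‖_op. -/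
open ContinuousLinearMap

/-!
For symmetric `S` the function `y ↦ ‖S y‖²` is the quadratic form of `S²`, so `‖S B‖²` depends on
`S² = Q⁻¹` only and changes by at most `‖B‖² ‖Q⁻¹ - Q̂⁻¹‖`. The resolvent identity
`Q⁻¹ - Q̂⁻¹ = Q̂⁻¹ (Q̂ - Q) Q⁻¹` bounds the last factor.
-/

theorem rightInv_sub_leftInv {R : Type*} [Ring R] {a b a' b' : R}
    (ha : a * a' = 1) (hb : b' * b = 1) : a' - b' = b' * (b - a) * a' := by
  rw [mul_sub, hb, sub_mul, one_mul, mul_assoc, ha, mul_one]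

theorem norm_rightInv_sub_leftInv_le {R : Type*} [SeminormedRing R] {a b a' b' : R}
    (ha : a * a' = 1) (hb : b' * b = 1) : ‖a' - b'‖ ≤ ‖b'‖ * ‖a - b‖ * ‖a'‖ := by
  rw [rightInv_sub_leftInv ha hb, norm_sub_rev a b]
  exact norm_mul₃_le

section

variable {𝕜 E F : Type*}

theorem opNorm_sq_le_of_forall_norm_sq_le [NontriviallyNormedField 𝕜]
    [SeminormedAddCommGroup E] [NormedSpace 𝕜 E] [SeminormedAddCommGroup F] [NormedSpace 𝕜 F]
    (A : E →L[𝕜] F) {C : ℝ} (hC : 0 ≤ C) (h : ∀ x, ‖A x‖ ^ 2 ≤ C * ‖x‖ ^ 2) : ‖A‖ ^ 2 ≤ C := by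
  refine (Real.le_sqrt (norm_nonneg A) hC).1 (A.opNorm_le_bound C.sqrt_nonneg fun x ↦ ?_)
  refine le_of_sq_le_sq ?_ (by positivity)
  simpa only [mul_pow, Real.sq_sqrt hC] using h x

variable [RCLike 𝕜] [SeminormedAddCommGroup E] [NormedSpace 𝕜 E]
  [SeminormedAddCommGroup F] [InnerProductSpace 𝕜 F] {S T : F →L[𝕜] F}

theorem norm_sq_apply_eq_re_inner_comp_self (hS : S.IsSymmetric) (y : F) :
    ‖S y‖ ^ 2 = RCLike.re (inner 𝕜 ((S ∘L S) y) y) := by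
  rw [norm_sq_eq_re_inner (𝕜 := 𝕜)]
  exact congrArg _ (hS (S y) y).symm

theorem norm_sq_apply_le_add (hS : S.IsSymmetric) (hT : T.IsSymmetric) (y : F) :
    ‖S y‖ ^ 2 ≤ ‖T y‖ ^ 2 + ‖S ∘L S - T ∘L T‖ * ‖y‖ ^ 2 := by
  rw [← sub_le_iff_le_add', norm_sq_apply_eq_re_inner_comp_self hS,
    norm_sq_apply_eq_re_inner_comp_self hT, ← map_sub, ← inner_sub_left, ← sub_apply]
  calc
    RCLike.re (inner 𝕜 ((S ∘L S - T ∘L T) y) y) ≤ ‖(S ∘L S - T ∘L T) y‖ * ‖y‖ :=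
      re_inner_le_norm _ _
    _ ≤ ‖S ∘L S - T ∘L T‖ * ‖y‖ * ‖y‖ := by gcongr; exact le_opNorm _ _
    _ = ‖S ∘L S - T ∘L T‖ * ‖y‖ ^ 2 := by ring

theorem norm_sq_comp_le_add (B : E →L[𝕜] F) (hS : S.IsSymmetric) (hT : T.IsSymmetric) :
    ‖S ∘L B‖ ^ 2 ≤ ‖T ∘L B‖ ^ 2 + ‖B‖ ^ 2 * ‖S ∘L S - T ∘L T‖ := by
  refine opNorm_sq_le_of_forall_norm_sq_le _ (by positivity) fun x ↦ ?_
  calc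
    ‖S (B x)‖ ^ 2 ≤ ‖(T ∘L B) x‖ ^ 2 + ‖S ∘L S - T ∘L T‖ * ‖B x‖ ^ 2 :=
      norm_sq_apply_le_add hS hT (B x)
    _ ≤ (‖T ∘L B‖ * ‖x‖) ^ 2 + ‖S ∘L S - T ∘L T‖ * (‖B‖ * ‖x‖) ^ 2 := by
      gcongr <;> exact le_opNorm _ _
    _ = (‖T ∘L B‖ ^ 2 + ‖B‖ ^ 2 * ‖S ∘L S - T ∘L T‖) * ‖x‖ ^ 2 := by ring

theorem abs_norm_sq_comp_sub_norm_sq_comp_le (B : E →L[𝕜] F)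
    (hS : S.IsSymmetric) (hT : T.IsSymmetric) :
    |‖S ∘L B‖ ^ 2 - ‖T ∘L B‖ ^ 2| ≤ ‖B‖ ^ 2 * ‖S ∘L S - T ∘L T‖ := by
  refine abs_sub_le_iff.2 ⟨sub_le_iff_le_add'.2 (norm_sq_comp_le_add B hS hT),
    sub_le_iff_le_add'.2 ?_⟩
  rw [norm_sub_rev]
  exact norm_sq_comp_le_add B hT hS

end

theorem stmt14_general {𝕜 H K : Type*} [RCLike 𝕜] [SeminormedAddCommGroup H] [NormedSpace 𝕜 H]
    [SeminormedAddCommGroup K] [InnerProductSpace 𝕜 K]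
    (B : H →L[𝕜] K) {Q Qhat JQ JQhat S Shat : K →L[𝕜] K}
    (hJQ : Q ∘L JQ = 1) (hJQhat : JQhat ∘L Qhat = 1)
    (hS : S.IsSymmetric) (hSsq : S ∘L S = JQ)
    (hShat : Shat.IsSymmetric) (hShatsq : Shat ∘L Shat = JQhat) :
    |‖S ∘L B‖ ^ 2 - ‖Shat ∘L B‖ ^ 2| ≤ ‖B‖ ^ 2 * ‖JQhat‖ * ‖Q - Qhat‖ * ‖JQ‖ :=
  calc
    |‖S ∘L B‖ ^ 2 - ‖Shat ∘L B‖ ^ 2| ≤ ‖B‖ ^ 2 * ‖JQ - JQhat‖ :=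
      hSsq ▸ hShatsq ▸ abs_norm_sq_comp_sub_norm_sq_comp_le B hS hShat
    _ ≤ ‖B‖ ^ 2 * (‖JQhat‖ * ‖Q - Qhat‖ * ‖JQ‖) := by
      gcongr
      exact norm_rightInv_sub_leftInv_le hJQ hJQhat
    _ = ‖B‖ ^ 2 * ‖JQhat‖ * ‖Q - Qhat‖ * ‖JQ‖ := by ring

/-- `| ‖Q^{-1/2} B‖² − ‖Q̂^{-1/2} B‖² | ≤ ‖B‖² ‖Q̂^{-1}‖ ‖Q − Q̂‖ ‖Q^{-1}‖`.
Here `JQ`, `JQhat` are the inverses of the invertible positive operators `Q`, `Qhat`,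
and `S`, `Shat` the positive square roots of these inverses. -/
theorem stmt14
    {H K : Type*} [NormedAddCommGroup H] [InnerProductSpace ℝ H] [CompleteSpace H]
    [NormedAddCommGroup K] [InnerProductSpace ℝ K] [CompleteSpace K]
    (B : H →L[ℝ] K) (Q Qhat : K →L[ℝ] K)
    (hQ : Q.IsPositive) (hQhat : Qhat.IsPositive)
    (JQ JQhat S Shat : K →L[ℝ] K)
    (hJQ : Q ∘L JQ = 1) (hJQ' : JQ ∘L Q = 1)
    (hJQhat : Qhat ∘L JQhat = 1) (hJQhat' : JQhat ∘L Qhat = 1)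
    (hS : S.IsPositive) (hSsq : S ∘L S = JQ)
    (hShat : Shat.IsPositive) (hShatsq : Shat ∘L Shat = JQhat) :
    |‖S ∘L B‖ ^ 2 - ‖Shat ∘L B‖ ^ 2|
      ≤ ‖B‖ ^ 2 * ‖JQhat‖ * ‖Q - Qhat‖ * ‖JQ‖ := by
  exact stmt14_general B hJQ hJQhat' hS.isSymmetric hSsq hShat.isSymmetric hShatsq
end

section
/- Let H and K be real Hilbert spaces, B, B̂ : H → K bounded linear operators, and Q̂ : K → K an invertible positive bounded operator. Then | ‖Q̂^{-1/2} B‖²_op − ‖Q̂^{-1/2} B̂‖²_op | ≤ ‖Q̂^{-1}‖_op ‖B B* − B̂ B̂*‖_op. -/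
open ContinuousLinearMap

section

variable {𝕜 E E' F G : Type*} [RCLike 𝕜]
  [NormedAddCommGroup E] [InnerProductSpace 𝕜 E] [CompleteSpace E]
  [NormedAddCommGroup E'] [InnerProductSpace 𝕜 E'] [CompleteSpace E']
  [NormedAddCommGroup F] [InnerProductSpace 𝕜 F] [CompleteSpace F]
  [NormedAddCommGroup G] [InnerProductSpace 𝕜 G] [CompleteSpace G]

theorem norm_self_comp_adjoint (A : E →L[𝕜] F) : ‖A ∘L adjoint A‖ = ‖A‖ * ‖A‖ := by
  simpa only [adjoint_adjoint, LinearIsometryEquiv.norm_map] using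
    norm_adjoint_comp_self (adjoint A)

theorem norm_comp_sq_eq_norm_conj_adjoint (T : F →L[𝕜] G) (A : E →L[𝕜] F) :
    ‖T ∘L A‖ ^ 2 = ‖T ∘L (A ∘L adjoint A) ∘L adjoint T‖ := by
  rw [sq, ← norm_self_comp_adjoint, adjoint_comp]
  simp only [comp_assoc]

theorem norm_conj_adjoint_le (T : F →L[𝕜] G) (D : F →L[𝕜] F) :
    ‖T ∘L D ∘L adjoint T‖ ≤ ‖adjoint T ∘L T‖ * ‖D‖ :=
  calc ‖T ∘L D ∘L adjoint T‖
      ≤ ‖T‖ * (‖D‖ * ‖adjoint T‖) :=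
        (opNorm_comp_le _ _).trans <| by gcongr; exact opNorm_comp_le _ _
    _ = ‖T‖ * ‖T‖ * ‖D‖ := by rw [LinearIsometryEquiv.norm_map]; ring
    _ = ‖adjoint T ∘L T‖ * ‖D‖ := by rw [norm_adjoint_comp_self]

theorem stmt15_general (B : E →L[𝕜] F) (Bhat : E' →L[𝕜] F) (S : F →L[𝕜] G) :
    |‖S ∘L B‖ ^ 2 - ‖S ∘L Bhat‖ ^ 2|
      ≤ ‖adjoint S ∘L S‖ * ‖B ∘L adjoint B - Bhat ∘L adjoint Bhat‖ :=
  calc |‖S ∘L B‖ ^ 2 - ‖S ∘L Bhat‖ ^ 2|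
      = |‖S ∘L (B ∘L adjoint B) ∘L adjoint S‖
          - ‖S ∘L (Bhat ∘L adjoint Bhat) ∘L adjoint S‖| := by
        simp only [norm_comp_sq_eq_norm_conj_adjoint]
    _ ≤ ‖S ∘L (B ∘L adjoint B) ∘L adjoint S
          - S ∘L (Bhat ∘L adjoint Bhat) ∘L adjoint S‖ := abs_norm_sub_norm_le _ _
    _ = ‖S ∘L (B ∘L adjoint B - Bhat ∘L adjoint Bhat) ∘L adjoint S‖ := by
        rw [sub_comp, comp_sub]
    _ ≤ ‖adjoint S ∘L S‖ * ‖B ∘L adjoint B - Bhat ∘L adjoint Bhat‖ :=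
        norm_conj_adjoint_le S _

end

/-- `| ‖Q̂^{-1/2} B‖² − ‖Q̂^{-1/2} B̂‖² | ≤ ‖Q̂^{-1}‖ ‖B B* − B̂ B̂*‖`.
Here `JQhat` is the inverse of the invertible positive operator `Qhat` and
`Shat` the positive square root of this inverse. -/
theorem stmt15
    {H K : Type*} [NormedAddCommGroup H] [InnerProductSpace ℝ H] [CompleteSpace H]
    [NormedAddCommGroup K] [InnerProductSpace ℝ K] [CompleteSpace K]
    (B Bhat : H →L[ℝ] K) (Qhat : K →L[ℝ] K)
    (hQhat : Qhat.IsPositive)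
    (JQhat Shat : K →L[ℝ] K)
    (hJQhat : Qhat ∘L JQhat = 1) (hJQhat' : JQhat ∘L Qhat = 1)
    (hShat : Shat.IsPositive) (hShatsq : Shat ∘L Shat = JQhat) :
    |‖Shat ∘L B‖ ^ 2 - ‖Shat ∘L Bhat‖ ^ 2|
      ≤ ‖JQhat‖ * ‖B ∘L adjoint B - Bhat ∘L adjoint Bhat‖ := by
  simpa only [hShat.isSelfAdjoint.adjoint_eq, hShatsq] using stmt15_general B Bhat Shat
end
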